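/- arXiv:1403.0418 — 2 statements merged into one kernel-verified Lean document; each statement's English description precedes it below -/
import Mathlib

section
/- Let 0 ≤ c ≤ 1 and r ≥ 0. The canonical state with a right-handed spherical steering ellipsoid of radius r centred at (0,0,c), namely ρ̃((0,0,c),(r,r,r)), is positive semidefinite if and only if r ≤ (√(4 − 3c²) − 1)/3. (This is the separable–entangled boundary for spherical steering ellipsoids: right-handed spheres exceeding this radius are unphysical, and left-handed spheres exceeding it are entangled.) -/
open Matrix Kronecker Polynomial
open scoped ComplexOrder

noncomputable section

/-- The Pauli matrices: `pauli 0 = I₂`, `pauli 1 = σ₁`, `pauli 2 = σ₂`, `pauli 3 = σ₃`. -/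
def pauli : Fin 4 → Matrix (Fin 2) (Fin 2) ℂ
  | 0 => !![1, 0; 0, 1]
  | 1 => !![0, 1; 1, 0]
  | 2 => !![0, -Complex.I; Complex.I, 0]
  | 3 => !![1, 0; 0, -1]

/-- Euclidean norm of a vector in ℝ³. -/
def norm3 (v : Fin 3 → ℝ) : ℝ := Real.sqrt (∑ i, v i ^ 2)

/-- The canonical axis-aligned two-qubit operator with steering-ellipsoid centre `c`
and signed semiaxes `t`:
`ρ̃(c,t) = (1/4)(I₄ + Σᵢ cᵢ (σᵢ⊗σ₀) + Σᵢ tᵢ (σᵢ⊗σᵢ))`. -/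
def rhoTilde (c t : Fin 3 → ℝ) : Matrix (Fin 2 × Fin 2) (Fin 2 × Fin 2) ℂ :=
  (1 / 4 : ℂ) • ((1 : Matrix (Fin 2 × Fin 2) (Fin 2 × Fin 2) ℂ)
    + ∑ i : Fin 3, (c i : ℂ) • (pauli i.succ ⊗ₖ pauli 0)
    + ∑ i : Fin 3, (t i : ℂ) • (pauli i.succ ⊗ₖ pauli i.succ))


/-! A state with centre on the third axis commutes with `σ₃ ⊗ σ₃`, so up to the factor `1/4` it
splits into two qubit operators `p + x σ₁ + z σ₃`, each with eigenvalues `p ± √(z² + x²)`. For a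
right-handed sphere the binding constraint comes from the odd-parity block and reads
`√(c² + 4r²) ≤ 1 - r`, which is `(3r + 1)² ≤ 4 - 3c²` after squaring. -/

section PosSemidef

theorem posSemidef_fromBlocks_zero_iff {m n R : Type*} [Ring R] [PartialOrder R] [AddLeftMono R]
    [StarRing R] {A : Matrix m m R} {D : Matrix n n R} :
    (fromBlocks A 0 0 D).PosSemidef ↔ A.PosSemidef ∧ D.PosSemidef := by
  refine ⟨fun h => ⟨h.submatrix Sum.inl, h.submatrix Sum.inr⟩, fun ⟨hA, hD⟩ =>
    ⟨hA.isHermitian.fromBlocks conjTranspose_zero hD.isHermitian, fun x => ?_⟩⟩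
  obtain ⟨⟨y, z⟩, rfl⟩ := Finsupp.sumFinsuppEquivProdFinsupp.symm.surjective x
  change 0 ≤ (y.sumElim z).sum _
  simpa [Finsupp.sum_sumElim, Function.comp_def] using add_nonneg (hA.2 y) (hD.2 z)

variable {𝕜 : Type*} [RCLike 𝕜]

theorem posSemidef_smul_iff {n : Type*} {M : Matrix n n 𝕜} {a : 𝕜} (ha : 0 < a) :
    (a • M).PosSemidef ↔ M.PosSemidef := by
  refine ⟨fun h => ?_, fun h => h.smul ha.le⟩
  simpa only [inv_smul_smul₀ ha.ne'] using h.smul (RCLike.inv_pos_of_pos ha).le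

theorem posSemidef_fin_two_iff {A : Matrix (Fin 2) (Fin 2) 𝕜} (hA : A.IsHermitian) :
    A.PosSemidef ↔ 0 ≤ A.trace ∧ 0 ≤ A.det := by
  refine ⟨fun h => ⟨h.trace_nonneg, h.det_nonneg⟩, fun ⟨htrace, hdet⟩ => ?_⟩
  have hsum : 0 ≤ hA.eigenvalues 0 + hA.eigenvalues 1 := by
    rw [hA.trace_eq_sum_eigenvalues, Fin.sum_univ_two] at htrace
    exact_mod_cast htrace
  have hprod : 0 ≤ hA.eigenvalues 0 * hA.eigenvalues 1 := by
    rw [hA.det_eq_prod_eigenvalues, Fin.prod_univ_two] at hdet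
    exact_mod_cast hdet
  rw [hA.posSemidef_iff_eigenvalues_nonneg, Pi.le_def, Fin.forall_fin_two]
  constructor <;> dsimp only [Pi.zero_apply] <;> nlinarith

/-- The Hermitian matrix `p + Re w • σ₁ - Im w • σ₂ + z • σ₃`, an unnormalised qubit operator with
Bloch vector `(Re w, -Im w, z)`; over `𝕜 = ℝ` the `σ₂` component is absent. -/
def blochMatrix (p z : ℝ) (w : 𝕜) : Matrix (Fin 2) (Fin 2) 𝕜 :=
  !![(p : 𝕜) + z, w; star w, p - z]

theorem isHermitian_blochMatrix (p z : ℝ) (w : 𝕜) : (blochMatrix p z w).IsHermitian := by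
  ext i j
  fin_cases i <;> fin_cases j <;> simp [blochMatrix]

theorem trace_blochMatrix (p z : ℝ) (w : 𝕜) :
    (blochMatrix p z w).trace = ((2 * p : ℝ) : 𝕜) := by
  rw [blochMatrix, trace_fin_two_of]
  push_cast
  ring

theorem det_blochMatrix (p z : ℝ) (w : 𝕜) :
    (blochMatrix p z w).det = ((p ^ 2 - (z ^ 2 + ‖w‖ ^ 2) : ℝ) : 𝕜) := by
  rw [blochMatrix, det_fin_two_of, RCLike.star_def, RCLike.mul_conj]
  push_cast
  ring

theorem posSemidef_blochMatrix_iff (p z : ℝ) (w : 𝕜) :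
    (blochMatrix p z w).PosSemidef ↔ √(z ^ 2 + ‖w‖ ^ 2) ≤ p := by
  rw [posSemidef_fin_two_iff (isHermitian_blochMatrix p z w), trace_blochMatrix, det_blochMatrix,
    RCLike.ofReal_nonneg, RCLike.ofReal_nonneg, sub_nonneg, mul_nonneg_iff_of_pos_left two_pos,
    Real.sqrt_le_iff]

end PosSemidef

/-- Splits the two-qubit computational basis into the even-parity vectors `|i, i⟩` and the
odd-parity vectors `|i, 1 - i⟩`, both indexed by the first bit. -/
def parityEquiv : Fin 2 ⊕ Fin 2 ≃ Fin 2 × Fin 2 :=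
  Equiv.ofBijective (Sum.elim (fun i => (i, i)) fun i => (i, i.rev)) (by decide)

theorem rhoTilde_axial_submatrix_parityEquiv (c : ℝ) (t : Fin 3 → ℝ) :
    (rhoTilde ![0, 0, c] t).submatrix parityEquiv parityEquiv = (1 / 4 : ℂ) •
      fromBlocks (blochMatrix (1 + t 2) c ((t 0 - t 1 : ℝ) : ℂ)) 0
        0 (blochMatrix (1 - t 2) c ((t 0 + t 1 : ℝ) : ℂ)) := by
  ext (i | i) (j | j) <;> fin_cases i <;> fin_cases j <;>
    simp [parityEquiv, blochMatrix, rhoTilde, pauli, Fin.sum_univ_three] <;> ring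

theorem posSemidef_rhoTilde_axial_iff (c : ℝ) (t : Fin 3 → ℝ) :
    (rhoTilde ![0, 0, c] t).PosSemidef ↔
      √(c ^ 2 + (t 0 - t 1) ^ 2) ≤ 1 + t 2 ∧ √(c ^ 2 + (t 0 + t 1) ^ 2) ≤ 1 - t 2 := by
  have quarter_pos : (0 : ℂ) < 1 / 4 := by positivity
  have even_block := posSemidef_blochMatrix_iff (1 + t 2) c ((t 0 - t 1 : ℝ) : ℂ)
  have odd_block := posSemidef_blochMatrix_iff (1 - t 2) c ((t 0 + t 1 : ℝ) : ℂ)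
  rw [Complex.norm_real, Real.norm_eq_abs, sq_abs] at even_block odd_block
  rw [← posSemidef_submatrix_equiv parityEquiv, rhoTilde_axial_submatrix_parityEquiv,
    posSemidef_smul_iff quarter_pos, posSemidef_fromBlocks_zero_iff]
  exact and_congr even_block odd_block

theorem posSemidef_rhoTilde_sphere_iff (c : ℝ) {r : ℝ} (hr : 0 ≤ r) :
    (rhoTilde ![0, 0, c] ![r, r, r]).PosSemidef ↔ √(c ^ 2 + (2 * r) ^ 2) ≤ 1 - r := by
  have even_of_odd (h : √(c ^ 2 + (2 * r) ^ 2) ≤ 1 - r) : √(c ^ 2 + (r - r) ^ 2) ≤ 1 + r :=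
    calc √(c ^ 2 + (r - r) ^ 2) ≤ √(c ^ 2 + (2 * r) ^ 2) := by
          gcongr √(_ + ?_)
          nlinarith
      _ ≤ 1 - r := h
      _ ≤ 1 + r := by linarith
  have axial := posSemidef_rhoTilde_axial_iff c ![r, r, r]
  simp only [cons_val, ← two_mul] at axial
  exact axial.trans (and_iff_right_of_imp even_of_odd)

theorem sqrt_sq_add_two_mul_sq_le_one_sub_iff {c r : ℝ} (hc : 3 * c ^ 2 ≤ 4) (hr : 0 ≤ r) :
    √(c ^ 2 + (2 * r) ^ 2) ≤ 1 - r ↔ r ≤ (√(4 - 3 * c ^ 2) - 1) / 3 :=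
  calc √(c ^ 2 + (2 * r) ^ 2) ≤ 1 - r
      ↔ 0 ≤ 1 - r ∧ c ^ 2 + (2 * r) ^ 2 ≤ (1 - r) ^ 2 := Real.sqrt_le_iff
    _ ↔ c ^ 2 + (2 * r) ^ 2 ≤ (1 - r) ^ 2 := and_iff_right_of_imp fun h => by nlinarith
    _ ↔ (3 * r + 1) ^ 2 ≤ 4 - 3 * c ^ 2 := by constructor <;> intro h <;> linarith
    _ ↔ 3 * r + 1 ≤ √(4 - 3 * c ^ 2) := by
      rw [← sq_le_sq₀ (by positivity) (Real.sqrt_nonneg _), Real.sq_sqrt (sub_nonneg.2 hc)]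
    _ ↔ r ≤ (√(4 - 3 * c ^ 2) - 1) / 3 := by
      rw [le_div_iff₀' three_pos, le_sub_iff_add_le]

theorem stmt6_general (c r : ℝ) (hc : 3 * c ^ 2 ≤ 4) (hr : 0 ≤ r) :
    (rhoTilde ![0, 0, c] ![r, r, r]).PosSemidef ↔ r ≤ (√(4 - 3 * c ^ 2) - 1) / 3 :=
  (posSemidef_rhoTilde_sphere_iff c hr).trans (sqrt_sq_add_two_mul_sq_le_one_sub_iff hc hr)

/-- Separable–entangled boundary for spherical steering ellipsoids: the right-handed
sphere of radius `r` centred at `(0,0,c)` is physical iff `r ≤ (√(4 − 3c²) − 1)/3`. -/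
theorem stmt6 (c r : ℝ) (hc0 : 0 ≤ c) (hc1 : c ≤ 1) (hr : 0 ≤ r) :
    (rhoTilde ![0, 0, c] ![r, r, r]).PosSemidef ↔
      r ≤ (Real.sqrt (4 - 3 * c ^ 2) - 1) / 3 :=
  stmt6_general c r (by nlinarith) hr
end
end

section
/- Let ρ be a 4×4 positive semidefinite complex matrix of unit trace (a two-qubit state) with ‖b‖ < 1, and suppose ρ is separable. Then γ_b⁴ |det Θ(ρ)| ≤ (1/54)(1 − 9‖c_A‖² + (1 + 3‖c_A‖²)^{3/2}); equivalently, the steering-ellipsoid volume satisfies V_A ≤ (2π/81)(1 − 9‖c_A‖² + (1 + 3‖c_A‖²)^{3/2}). In particular any physical state whose ellipsoid volume exceeds this bound is entangled. -/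
open Matrix Kronecker Polynomial
open scoped ComplexOrder

noncomputable section

/-- The Pauli-basis expansion matrix `Θ(ρ)_{μν} = Re tr(ρ (σ_μ ⊗ σ_ν))`. -/
def Theta (ρ : Matrix (Fin 2 × Fin 2) (Fin 2 × Fin 2) ℂ) : Matrix (Fin 4) (Fin 4) ℝ :=
  Matrix.of fun μ ν => ((ρ * (pauli μ ⊗ₖ pauli ν)).trace).re

/-- A two-qubit matrix is separable if it is a finite convex-type combination
`Σₖ pₖ Aₖ ⊗ Bₖ` with `pₖ ≥ 0` and `Aₖ`, `Bₖ` positive semidefinite 2×2 matrices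
of unit trace. -/
def SepState (ρ : Matrix (Fin 2 × Fin 2) (Fin 2 × Fin 2) ℂ) : Prop :=
  ∃ (n : ℕ) (p : Fin n → ℝ) (A B : Fin n → Matrix (Fin 2) (Fin 2) ℂ),
    (∀ k, 0 ≤ p k) ∧
    (∀ k, (A k).PosSemidef ∧ (A k).trace = 1) ∧
    (∀ k, (B k).PosSemidef ∧ (B k).trace = 1) ∧
    ρ = ∑ k, (p k : ℂ) • (A k ⊗ₖ B k)

/-!
A separable state is an ensemble of products of vectors of the future light cone of Minkowski
space, and Lorentz boosts on either side preserve this form. Boosting Bob's side by `-b` centres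
his marginal: Alice's Bloch vector becomes `c_A` and the correlation block acquires determinant
`γ_b⁴ det Θ`. Boosting Alice's side by any velocity `d`, without the Lorentz factor, then multiplies
that determinant by `1 - ‖d‖²` and the total weight by `1 + d ⬝ᵥ c_A`.

For cone vectors `(rₖ, xₖ)` and `(sₖ, yₖ)`, polar decomposition and Cauchy–Schwarz bound the trace
norm of `∑ xₖ yₖᵀ` by `∑ rₖ sₖ`, and AM–GM for singular values turns this into
`27 |det ∑ xₖ yₖᵀ| ≤ (∑ rₖ sₖ) ^ 3`. Hence `27 (1 - ‖d‖²) γ_b⁴ |det Θ| ≤ (1 + d ⬝ᵥ c_A) ^ 3` for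
every `‖d‖ < 1`, and the theorem is the optimum over `d` antiparallel to `c_A`.
-/

variable {ι κ : Type*} [Fintype ι] [Fintype κ]

section LightCone

/-- The closed future light cone of the Minkowski space `ℝ × ℝ^ι`, as a predicate on the time
component `r` and the space component `x`. Unnormalised qubit states are the points of this cone
for `ι = Fin 3`. -/
def InFutureCone (r : ℝ) (x : ι → ℝ) : Prop := 0 ≤ r ∧ x ⬝ᵥ x ≤ r ^ 2

theorem inFutureCone_one_iff {x : ι → ℝ} : InFutureCone 1 x ↔ x ⬝ᵥ x ≤ 1 := by
  simp [InFutureCone]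

theorem InFutureCone.smul {r c : ℝ} {x : ι → ℝ} (hx : InFutureCone r x) (hc : 0 ≤ c) :
    InFutureCone (c * r) (c • x) := by
  refine ⟨mul_nonneg hc hx.1, ?_⟩
  calc (c • x) ⬝ᵥ (c • x) = c ^ 2 * (x ⬝ᵥ x) := by
        simp only [smul_dotProduct, dotProduct_smul, smul_eq_mul]; ring
    _ ≤ c ^ 2 * r ^ 2 := by gcongr; exact hx.2
    _ = (c * r) ^ 2 := by ring

theorem InFutureCone.dotProduct_le {r s : ℝ} {x y : ι → ℝ} (hx : InFutureCone r x)
    (hy : InFutureCone s y) : x ⬝ᵥ y ≤ r * s := by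
  have sqrt_le {t : ℝ} {z : ι → ℝ} (hz : InFutureCone t z) : √(∑ i, z i ^ 2) ≤ t :=
    Real.sqrt_le_iff.2 ⟨hz.1, by simpa only [dotProduct, ← pow_two] using hz.2⟩
  calc x ⬝ᵥ y ≤ √(∑ i, x i ^ 2) * √(∑ i, y i ^ 2) := Real.sum_mul_le_sqrt_mul_sqrt _ x y
    _ ≤ r * s := mul_le_mul (sqrt_le hx) (sqrt_le hy) (Real.sqrt_nonneg _) hx.1

end LightCone

section Determinants

theorem det_eq_det_sub_mul_of_apply_zero_zero {R : Type*} [CommRing R] {n : ℕ}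
    {M : Matrix (Fin (n + 1)) (Fin (n + 1)) R} (h : M 0 0 = 1) :
    M.det = (of fun i j : Fin n => M i.succ j.succ - M i.succ 0 * M 0 j.succ).det := by
  let c : Fin (n + 1) → R := Fin.cons 0 fun i => M i.succ 0
  have hrow : M.det = (of fun i j => M i j - c i * M 0 j).det :=
    det_eq_of_forall_row_eq_smul_add_const c 0 rfl fun i j => by simp [c]
  have hcol (i : Fin n) : M i.succ 0 - c i.succ * M 0 0 = 0 := by simp [c, h]
  rw [hrow, det_succ_column_zero, Fin.sum_univ_succ]
  simp only [of_apply, hcol, mul_zero, zero_mul, Finset.sum_const_zero, add_zero]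
  simp only [c, Fin.cons_zero, h, sub_zero, mul_one, Fin.val_zero, pow_zero, one_mul,
    Fin.succAbove_zero]
  rfl

theorem card_pow_mul_prod_le_sum_pow {z : ι → ℝ} (hz : ∀ i, 0 ≤ z i) :
    (Fintype.card ι : ℝ) ^ Fintype.card ι * ∏ i, z i ≤ (∑ i, z i) ^ Fintype.card ι := by
  rcases isEmpty_or_nonempty ι with _ | _
  · simp
  have hn : Fintype.card ι ≠ 0 := Fintype.card_ne_zero
  have hmean : ∏ i, z i ^ (Fintype.card ι : ℝ)⁻¹ ≤ (Fintype.card ι : ℝ)⁻¹ * ∑ i, z i := by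
    rw [Finset.mul_sum]
    exact Real.geom_mean_le_arith_mean_weighted _ _ z (fun _ _ => by positivity) (by simp)
      fun i _ => hz i
  have hroot : (∏ i, z i ^ (Fintype.card ι : ℝ)⁻¹) ^ Fintype.card ι = ∏ i, z i := by
    rw [← Finset.prod_pow]
    exact Finset.prod_congr rfl fun i _ => Real.rpow_inv_natCast_pow (hz i) hn
  calc (Fintype.card ι : ℝ) ^ Fintype.card ι * ∏ i, z i
      ≤ (Fintype.card ι : ℝ) ^ Fintype.card ι *
          ((Fintype.card ι : ℝ)⁻¹ * ∑ i, z i) ^ Fintype.card ι := by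
        rw [← hroot]
        gcongr
        exact Finset.prod_nonneg fun i _ => Real.rpow_nonneg (hz i) _
    _ = (∑ i, z i) ^ Fintype.card ι := by
        rw [← mul_pow, mul_inv_cancel_left₀ (Nat.cast_ne_zero.2 hn)]

variable [DecidableEq ι]

open scoped MatrixOrder in
theorem exists_posSemidef_eq_mul_transpose (X : Matrix ι ι ℝ) (hX : X.det ≠ 0) :
    ∃ S O : Matrix ι ι ℝ, S.PosSemidef ∧ Oᵀ * O = 1 ∧ S = X * Oᵀ := by
  have hXX : 0 ≤ X * Xᵀ := by
    simpa using (posSemidef_self_mul_conjTranspose X).nonneg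
  set S := CFC.sqrt (X * Xᵀ)
  have hS : S.PosSemidef := (CFC.sqrt_nonneg (X * Xᵀ)).posSemidef
  have hSS : S * S = X * Xᵀ := CFC.sqrt_mul_sqrt_self _ hXX
  have hST : Sᵀ = S := by simpa [IsHermitian] using hS.1
  have hunit : IsUnit S.det := by
    have hdet := congrArg det hSS
    rw [det_mul, det_mul, det_transpose] at hdet
    refine isUnit_iff_ne_zero.2 fun h0 => hX ?_
    simpa [h0] using hdet.symm
  have hS_eq : S = X * (S⁻¹ * X)ᵀ := by
    rw [transpose_mul, transpose_nonsing_inv, hST, ← Matrix.mul_assoc, ← hSS, Matrix.mul_assoc,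
      mul_nonsing_inv _ hunit, Matrix.mul_one]
  refine ⟨S, S⁻¹ * X, hS, mul_eq_one_comm.1 ?_, hS_eq⟩
  rw [Matrix.mul_assoc, ← hS_eq, nonsing_inv_mul _ hunit]

theorem abs_det_eq_one_of_transpose_mul_self {O : Matrix ι ι ℝ} (hO : Oᵀ * O = 1) :
    |O.det| = 1 := by
  have h : O.det * O.det = 1 := by simpa using congrArg det hO
  exact (abs_eq zero_le_one).2 (mul_self_eq_one_iff.1 h)

theorem card_pow_mul_det_le_trace_pow {S : Matrix ι ι ℝ} (hS : S.PosSemidef) :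
    (Fintype.card ι : ℝ) ^ Fintype.card ι * S.det ≤ S.trace ^ Fintype.card ι := by
  simpa [hS.1.det_eq_prod_eigenvalues, hS.1.trace_eq_sum_eigenvalues]
    using card_pow_mul_prod_le_sum_pow hS.eigenvalues_nonneg

theorem InFutureCone.mulVec_of_orthogonal {r : ℝ} {x : ι → ℝ} (hx : InFutureCone r x)
    {O : Matrix ι ι ℝ} (hO : Oᵀ * O = 1) : InFutureCone r (O *ᵥ x) := by
  refine ⟨hx.1, le_of_eq_of_le ?_ hx.2⟩
  rw [dotProduct_mulVec, ← mulVec_transpose, mulVec_mulVec, hO, one_mulVec]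

theorem card_pow_mul_abs_det_sum_vecMulVec_le {r s : κ → ℝ} {x y : κ → ι → ℝ}
    (hx : ∀ k, InFutureCone (r k) (x k)) (hy : ∀ k, InFutureCone (s k) (y k)) :
    (Fintype.card ι : ℝ) ^ Fintype.card ι * |(∑ k, vecMulVec (x k) (y k)).det| ≤
      (∑ k, r k * s k) ^ Fintype.card ι := by
  set X := ∑ k, vecMulVec (x k) (y k) with hX_def
  by_cases hX : X.det = 0
  · rw [hX, abs_zero, mul_zero]
    exact pow_nonneg (Finset.sum_nonneg fun k _ => mul_nonneg (hx k).1 (hy k).1) _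
  obtain ⟨S, O, hS, hO, hSX⟩ := exists_posSemidef_eq_mul_transpose X hX
  have hdet : |X.det| = S.det := by
    rw [← abs_of_nonneg hS.det_nonneg, hSX, det_mul, abs_mul, det_transpose,
      abs_det_eq_one_of_transpose_mul_self hO, mul_one]
  have htrace : S.trace ≤ ∑ k, r k * s k := by
    rw [hSX, hX_def, Finset.sum_mul, trace_sum]
    refine Finset.sum_le_sum fun k _ => ?_
    rw [vecMulVec_mul, trace_vecMulVec, vecMul_transpose]
    exact (hx k).dotProduct_le ((hy k).mulVec_of_orthogonal hO)
  rw [hdet]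
  exact (card_pow_mul_det_le_trace_pow hS).trans (pow_le_pow_left₀ hS.trace_nonneg htrace _)

end Determinants

section Boost

variable [DecidableEq ι]

/-- The space-space block of the Lorentz boost with velocity `d`, divided by the Lorentz factor
`1 / √(1 - d ⬝ᵥ d)` so that no singularity occurs at the speed of light. With this normalisation
the whole boost is `(r, x) ↦ (r + d ⬝ᵥ x, boostMatrix d *ᵥ x + r • d)`. -/
def boostMatrix (d : ι → ℝ) : Matrix ι ι ℝ :=
  √(1 - d ⬝ᵥ d) • 1 + (1 + √(1 - d ⬝ᵥ d))⁻¹ • vecMulVec d d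

theorem boostMatrix_mulVec (d x : ι → ℝ) :
    boostMatrix d *ᵥ x = √(1 - d ⬝ᵥ d) • x + ((1 + √(1 - d ⬝ᵥ d))⁻¹ * (d ⬝ᵥ x)) • d := by
  rw [boostMatrix, add_mulVec, smul_mulVec, one_mulVec, smul_mulVec, vecMulVec_mulVec,
    op_smul_eq_smul, smul_smul]

@[simp]
theorem boostMatrix_neg (d : ι → ℝ) : boostMatrix (-d) = boostMatrix d := by
  simp [boostMatrix, neg_vecMulVec, vecMulVec_neg]

@[simp]
theorem transpose_boostMatrix (d : ι → ℝ) : (boostMatrix d)ᵀ = boostMatrix d := by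
  simp [boostMatrix, transpose_vecMulVec]

theorem sqrt_one_sub_add_inv_mul_self {u : ℝ} (hu : u ≤ 1) :
    √(1 - u) + (1 + √(1 - u))⁻¹ * u = 1 := by
  have hsq := Real.sq_sqrt (sub_nonneg.2 hu)
  field_simp
  linear_combination hsq

theorem boostMatrix_mulVec_self {d : ι → ℝ} (hd : d ⬝ᵥ d ≤ 1) : boostMatrix d *ᵥ d = d := by
  rw [boostMatrix_mulVec, ← add_smul, sqrt_one_sub_add_inv_mul_self hd, one_smul]

theorem sqrt_mul_det_boostMatrix {d : ι → ℝ} (hd : d ⬝ᵥ d < 1) :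
    √(1 - d ⬝ᵥ d) * (boostMatrix d).det = √(1 - d ⬝ᵥ d) ^ Fintype.card ι := by
  have hone := sqrt_one_sub_add_inv_mul_self hd.le
  have hm : 0 < √(1 - d ⬝ᵥ d) := Real.sqrt_pos.2 (sub_pos.2 hd)
  rw [boostMatrix]
  set m := √(1 - d ⬝ᵥ d)
  set q := (1 + m)⁻¹
  have hfactor : m • (1 : Matrix ι ι ℝ) + q • vecMulVec d d =
      m • (1 + vecMulVec ((m⁻¹ * q) • d) d) := by
    rw [smul_add, smul_vecMulVec, smul_smul, mul_inv_cancel_left₀ hm.ne']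
  rw [hfactor, det_smul, vecMulVec_eq Unit, det_one_add_replicateCol_mul_replicateRow,
    dotProduct_smul, smul_eq_mul]
  calc m * (m ^ Fintype.card ι * (1 + m⁻¹ * q * (d ⬝ᵥ d)))
      = m ^ Fintype.card ι * (m + q * (d ⬝ᵥ d)) := by field_simp
    _ = m ^ Fintype.card ι := by rw [hone, mul_one]

theorem det_boostMatrix_fin_three {d : Fin 3 → ℝ} (hd : d ⬝ᵥ d < 1) :
    (boostMatrix d).det = 1 - d ⬝ᵥ d := by
  have hm : √(1 - d ⬝ᵥ d) ≠ 0 := (Real.sqrt_pos.2 (sub_pos.2 hd)).ne'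
  refine mul_left_cancel₀ hm ?_
  rw [sqrt_mul_det_boostMatrix hd, Fintype.card_fin, pow_succ', Real.sq_sqrt (sub_pos.2 hd).le]

theorem sq_sub_dotProduct_self_boost {d : ι → ℝ} (hd : d ⬝ᵥ d ≤ 1) (r : ℝ) (x : ι → ℝ) :
    (r + d ⬝ᵥ x) ^ 2 - (boostMatrix d *ᵥ x + r • d) ⬝ᵥ (boostMatrix d *ᵥ x + r • d) =
      (1 - d ⬝ᵥ d) * (r ^ 2 - x ⬝ᵥ x) := by
  have hsq := Real.sq_sqrt (sub_nonneg.2 hd)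
  have hone := sqrt_one_sub_add_inv_mul_self hd
  rw [boostMatrix_mulVec]
  simp only [dotProduct_add, add_dotProduct, dotProduct_smul, smul_dotProduct, smul_eq_mul,
    dotProduct_comm x d]
  set m := √(1 - d ⬝ᵥ d)
  have hinv : (1 + m)⁻¹ * (1 + m) = 1 := inv_mul_cancel₀ (by positivity)
  linear_combination -(x ⬝ᵥ x) * hsq - (2 * r * (d ⬝ᵥ x) + (d ⬝ᵥ x) ^ 2 * (1 + m)⁻¹) * hone -
    (d ⬝ᵥ x) ^ 2 * hinv

theorem InFutureCone.boost {d x : ι → ℝ} {r : ℝ} (hx : InFutureCone r x) (hd : d ⬝ᵥ d ≤ 1) :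
    InFutureCone (r + d ⬝ᵥ x) (boostMatrix d *ᵥ x + r • d) := by
  have htime : -d ⬝ᵥ x ≤ 1 * r :=
    (inFutureCone_one_iff.2 (by simpa using hd)).dotProduct_le hx
  have hspace := sq_sub_dotProduct_self_boost hd r x
  have hnonneg := mul_nonneg (sub_nonneg.2 hd) (sub_nonneg.2 hx.2)
  rw [neg_dotProduct] at htime
  exact ⟨by linarith, by linarith⟩

theorem card_pow_mul_abs_det_boost_le_of_sum_smul_eq_zero {r s : κ → ℝ} {x y : κ → ι → ℝ}
    (hx : ∀ k, InFutureCone (r k) (x k)) (hy : ∀ k, InFutureCone (s k) (y k))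
    (hry : ∑ k, r k • y k = 0) {d : ι → ℝ} (hd : d ⬝ᵥ d ≤ 1) :
    (Fintype.card ι : ℝ) ^ Fintype.card ι *
        |(boostMatrix d * ∑ k, vecMulVec (x k) (y k)).det| ≤
      (∑ k, (r k + d ⬝ᵥ x k) * s k) ^ Fintype.card ι := by
  have hsum : ∑ k, vecMulVec (boostMatrix d *ᵥ x k + r k • d) (y k) =
      boostMatrix d * ∑ k, vecMulVec (x k) (y k) := by
    have hd_sum : ∑ k, vecMulVec (r k • d) (y k) = vecMulVec d (∑ k, r k • y k) := by
      ext i j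
      simp only [Matrix.sum_apply, vecMulVec_apply, Pi.smul_apply, Finset.sum_apply, smul_eq_mul,
        Finset.mul_sum]
      exact Finset.sum_congr rfl fun k _ => by ring
    simp only [add_vecMulVec, Finset.sum_add_distrib, hd_sum, hry, vecMulVec_zero, add_zero,
      Finset.mul_sum, mul_vecMulVec]
  rw [← hsum]
  exact card_pow_mul_abs_det_sum_vecMulVec_le (fun k => (hx k).boost hd) hy

theorem card_pow_mul_abs_det_boost_covariance_le {p : κ → ℝ} {α β : κ → ι → ℝ}
    (hp : ∀ k, 0 ≤ p k) (hp1 : ∑ k, p k = 1) (hα : ∀ k, α k ⬝ᵥ α k ≤ 1)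
    (hβ : ∀ k, β k ⬝ᵥ β k ≤ 1) {b c d : ι → ℝ} (hb : b = ∑ k, p k • β k)
    (hb1 : b ⬝ᵥ b ≤ 1) (hc : (1 - b ⬝ᵥ b) • c = ∑ k, (p k * (1 - b ⬝ᵥ β k)) • α k)
    (hd : d ⬝ᵥ d ≤ 1) :
    (Fintype.card ι : ℝ) ^ Fintype.card ι *
        |(boostMatrix d * ((∑ k, p k • vecMulVec (α k) (β k - b)) * boostMatrix b)).det| ≤
      ((1 - b ⬝ᵥ b) * (1 + d ⬝ᵥ c)) ^ Fintype.card ι := by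
  have hα' : ∀ k, InFutureCone (p k) (p k • α k) := fun k => by
    simpa using (inFutureCone_one_iff.2 (hα k)).smul (hp k)
  have hβ' : ∀ k, InFutureCone (1 - b ⬝ᵥ β k) (boostMatrix b *ᵥ (β k - b)) := fun k => by
    have := (inFutureCone_one_iff.2 (hβ k)).boost (d := -b) (by simpa using hb1)
    rw [mulVec_sub, boostMatrix_mulVec_self hb1]
    simpa [← sub_eq_add_neg] using this
  have hcenter : ∑ k, p k • (β k - b) = 0 := by
    simp only [smul_sub, Finset.sum_sub_distrib, ← Finset.sum_smul, hp1, one_smul, ← hb, sub_self]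
  have hcenter' : ∑ k, p k • boostMatrix b *ᵥ (β k - b) = 0 := by
    simp only [← mulVec_smul, ← mulVec_sum, hcenter, mulVec_zero]
  have hmatrix : ∑ k, vecMulVec (p k • α k) (boostMatrix b *ᵥ (β k - b)) =
      (∑ k, p k • vecMulVec (α k) (β k - b)) * boostMatrix b := by
    simp only [Finset.sum_mul, smul_vecMulVec, Matrix.smul_mul, vecMulVec_mul,
      ← mulVec_transpose, transpose_boostMatrix]
  have hb_sum : ∑ k, p k * (b ⬝ᵥ β k) = b ⬝ᵥ b := by
    conv_rhs => rw [hb, dotProduct_sum, ← hb]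
    simp only [dotProduct_smul, smul_eq_mul]
  have htime : ∑ k, (p k + d ⬝ᵥ (p k • α k)) * (1 - b ⬝ᵥ β k) =
      (1 - b ⬝ᵥ b) * (1 + d ⬝ᵥ c) := by
    calc _ = (∑ k, p k - ∑ k, p k * (b ⬝ᵥ β k)) +
          d ⬝ᵥ ∑ k, (p k * (1 - b ⬝ᵥ β k)) • α k := by
          simp only [dotProduct_sum, dotProduct_smul, smul_eq_mul, ← Finset.sum_sub_distrib,
            ← Finset.sum_add_distrib]
          exact Finset.sum_congr rfl fun k _ => by ring
      _ = _ := by rw [← hc, hp1, hb_sum, dotProduct_smul, smul_eq_mul]; ring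
  rw [← hmatrix, ← htime]
  exact card_pow_mul_abs_det_boost_le_of_sum_smul_eq_zero hα' hβ' hcenter' hd

end Boost

section Optimization

/-- The largest normalised ellipsoid volume `γ_b⁴ |det Θ|` compatible with separability, as a
function of the squared norm `C` of the centre of the ellipsoid. -/
def separableVolumeBound (C : ℝ) : ℝ := 1 / 54 * (1 - 9 * C + (1 + 3 * C) * √(1 + 3 * C))

theorem le_separableVolumeBound_of_lt_one {D C : ℝ} (hC0 : 0 ≤ C) (hC1 : C < 1)
    (h : ∀ t : ℝ, t ^ 2 * C < 1 → 27 * ((1 - t ^ 2 * C) * D) ≤ (1 - t * C) ^ 3) :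
    D ≤ separableVolumeBound C := by
  rw [separableVolumeBound]
  have hs := Real.sq_sqrt (show 0 ≤ 1 + 3 * C by linarith)
  have hs0 := Real.sqrt_nonneg (1 + 3 * C)
  generalize √(1 + 3 * C) = s at *
  have hs2 : 0 < 2 - s := by nlinarith
  obtain rfl : C = (s ^ 2 - 1) / 3 := by linarith
  -- `t = 3 / (1 + s)` is the critical point of `t ↦ (1 - t C) ^ 3 / (1 - t ^ 2 C)`.
  have hcube : 1 - 3 / (1 + s) * ((s ^ 2 - 1) / 3) = 2 - s := by field_simp; ring
  have hdenom : 1 - (3 / (1 + s)) ^ 2 * ((s ^ 2 - 1) / 3) = 2 * (2 - s) / (1 + s) := by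
    field_simp; ring
  have hpos : 0 < 2 * (2 - s) / (1 + s) := by positivity
  have hcrit := h (3 / (1 + s)) (by linarith)
  rw [hcube, hdenom] at hcrit
  have hcancel : 54 * D ≤ (2 - s) ^ 2 * (1 + s) := by
    refine le_of_mul_le_mul_left ?_ hs2
    calc (2 - s) * (54 * D) = 27 * (2 * (2 - s) / (1 + s) * D) * (1 + s) := by field_simp; ring
      _ ≤ (2 - s) ^ 3 * (1 + s) := by gcongr
      _ = (2 - s) * ((2 - s) ^ 2 * (1 + s)) := by ring
  linarith

theorem nonpos_of_forall_mul_le_one_sub_pow {D : ℝ}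
    (h : ∀ t : ℝ, t ^ 2 < 1 → 27 * ((1 - t ^ 2) * D) ≤ (1 - t) ^ 3) : D ≤ 0 := by
  by_contra! hD
  have h0 := h 0 (by norm_num)
  -- The optimal `t = 1` is excluded, so approach it at distance `D`.
  have hlim := h (1 - D) (by nlinarith)
  have : D * (27 * (2 - D) * D) ≤ D * D ^ 2 := by linarith
  nlinarith [le_of_mul_le_mul_left this hD]

theorem le_separableVolumeBound_of_forall {D : ℝ} (hD : 0 ≤ D) {c : ι → ℝ}
    (h : ∀ d : ι → ℝ, d ⬝ᵥ d < 1 → 27 * ((1 - d ⬝ᵥ d) * D) ≤ (1 + d ⬝ᵥ c) ^ 3) :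
    D ≤ separableVolumeBound (c ⬝ᵥ c) := by
  have hC0 : 0 ≤ c ⬝ᵥ c := by simpa using dotProduct_self_star_nonneg c
  have hline (t : ℝ) (ht : t ^ 2 * (c ⬝ᵥ c) < 1) :
      27 * ((1 - t ^ 2 * (c ⬝ᵥ c)) * D) ≤ (1 - t * (c ⬝ᵥ c)) ^ 3 := by
    have hsq : (-t • c) ⬝ᵥ (-t • c) = t ^ 2 * (c ⬝ᵥ c) := by
      simp only [smul_dotProduct, dotProduct_smul, smul_eq_mul]; ring
    have ht' := h (-t • c) (hsq.trans_lt ht)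
    rwa [hsq, smul_dotProduct, smul_eq_mul, neg_mul, ← sub_eq_add_neg] at ht'
  generalize c ⬝ᵥ c = C at *
  rcases lt_trichotomy C 1 with hC | rfl | hC
  · exact le_separableVolumeBound_of_lt_one hC0 hC hline
  · have hD0 := nonpos_of_forall_mul_le_one_sub_pow (by simpa using hline)
    have hsqrt : √(1 + 3 * 1) = 2 := by
      rw [show (1 + 3 * 1 : ℝ) = 2 ^ 2 by norm_num, Real.sqrt_sq zero_le_two]
    rw [separableVolumeBound, hsqrt]; linarith
  · -- Here a subluminal boost would make the right-hand side negative.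
    have hdenom : 1 - (2 / (1 + C)) ^ 2 * C = ((C - 1) / (1 + C)) ^ 2 := by field_simp; ring
    have hcube : 1 - 2 / (1 + C) * C = -((C - 1) / (1 + C)) := by field_simp; ring
    have hv : 0 < (C - 1) / (1 + C) := div_pos (by linarith) (by linarith)
    have hneg := hline (2 / (1 + C)) (by nlinarith)
    rw [hdenom, hcube, Odd.neg_pow (by decide)] at hneg
    have : 0 ≤ 27 * (((C - 1) / (1 + C)) ^ 2 * D) := by positivity
    linarith [pow_pos hv 3]

end Optimization

theorem abs_det_covariance_div_sq_le {p : κ → ℝ} {α β : κ → Fin 3 → ℝ}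
    (hp : ∀ k, 0 ≤ p k) (hp1 : ∑ k, p k = 1) (hα : ∀ k, α k ⬝ᵥ α k ≤ 1)
    (hβ : ∀ k, β k ⬝ᵥ β k ≤ 1) {b c : Fin 3 → ℝ} (hb : b = ∑ k, p k • β k)
    (hb1 : b ⬝ᵥ b < 1) (hc : (1 - b ⬝ᵥ b) • c = ∑ k, (p k * (1 - b ⬝ᵥ β k)) • α k) :
    |(∑ k, p k • vecMulVec (α k) (β k - b)).det| / (1 - b ⬝ᵥ b) ^ 2 ≤
      separableVolumeBound (c ⬝ᵥ c) := by
  have hb0 : 0 < 1 - b ⬝ᵥ b := sub_pos.2 hb1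
  refine le_separableVolumeBound_of_forall (by positivity) fun d hd => ?_
  have hbound := card_pow_mul_abs_det_boost_covariance_le hp hp1 hα hβ hb hb1.le hc hd.le
  rw [det_mul, det_mul, abs_mul, abs_mul, det_boostMatrix_fin_three hd,
    det_boostMatrix_fin_three hb1, abs_of_pos (sub_pos.2 hd), abs_of_pos hb0, Fintype.card_fin,
    mul_pow] at hbound
  refine le_of_mul_le_mul_left ?_ (pow_pos hb0 3)
  refine le_of_eq_of_le ?_ hbound
  field_simp
  push_cast
  ring

section Qubits

theorem isHermitian_pauli (μ : Fin 4) : (pauli μ).IsHermitian := by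
  ext i j
  fin_cases μ <;> fin_cases i <;> fin_cases j <;> simp [pauli]

theorem pauli_zero : pauli 0 = 1 := one_fin_two.symm

theorem im_trace_mul_eq_zero {A B : Matrix ι ι ℂ} (hA : A.IsHermitian) (hB : B.IsHermitian) :
    (A * B).trace.im = 0 := by
  rw [← Complex.conj_eq_iff_im, ← Complex.star_def, ← trace_conjTranspose, conjTranspose_mul,
    hA.eq, hB.eq, trace_mul_comm]

/-- The coordinate `Re tr(A σ_μ)` of a single-qubit operator `A` in the Pauli basis. -/
def pauliCoord (A : Matrix (Fin 2) (Fin 2) ℂ) (μ : Fin 4) : ℝ := (A * pauli μ).trace.re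

/-- The Bloch vector of a single-qubit operator. -/
def blochVector (A : Matrix (Fin 2) (Fin 2) ℂ) (i : Fin 3) : ℝ := pauliCoord A i.succ

theorem pauliCoord_zero {A : Matrix (Fin 2) (Fin 2) ℂ} (hA : A.trace = 1) :
    pauliCoord A 0 = 1 := by
  simp [pauliCoord, pauli_zero, hA]

theorem blochVector_eq {A : Matrix (Fin 2) (Fin 2) ℂ} (hA : A.IsHermitian) :
    blochVector A = ![2 * (A 0 1).re, -2 * (A 0 1).im, (A 0 0).re - (A 1 1).re] := by
  have h10 : A 1 0 = star (A 0 1) := (hA.apply 1 0).symm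
  ext i
  fin_cases i <;>
    simp [blochVector, pauliCoord, pauli, trace, mul_apply, Fin.sum_univ_two, h10] <;> ring

theorem det_re_eq_of_isHermitian {A : Matrix (Fin 2) (Fin 2) ℂ} (hA : A.IsHermitian) :
    A.det.re = (A 0 0).re * (A 1 1).re - ((A 0 1).re ^ 2 + (A 0 1).im ^ 2) := by
  have h10 : A 1 0 = star (A 0 1) := (hA.apply 1 0).symm
  have him : (A 0 0).im = 0 := Complex.conj_eq_iff_im.1 (hA.apply 0 0)
  simp [det_fin_two, h10, him, pow_two]

theorem sq_trace_sub_blochVector_dotProduct_self {A : Matrix (Fin 2) (Fin 2) ℂ}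
    (hA : A.IsHermitian) :
    A.trace.re ^ 2 - blochVector A ⬝ᵥ blochVector A = 4 * A.det.re := by
  rw [blochVector_eq hA, det_re_eq_of_isHermitian hA, trace_fin_two, Complex.add_re,
    vec3_dotProduct']
  ring

theorem blochVector_dotProduct_self_le_one {A : Matrix (Fin 2) (Fin 2) ℂ} (hA : A.PosSemidef)
    (htr : A.trace = 1) : blochVector A ⬝ᵥ blochVector A ≤ 1 := by
  have hdet : 0 ≤ A.det.re := (Complex.le_def.1 hA.det_nonneg).1
  have h := sq_trace_sub_blochVector_dotProduct_self hA.1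
  rw [htr, Complex.one_re] at h
  linarith

theorem Theta_sum_kronecker {p : κ → ℝ} {A B : κ → Matrix (Fin 2) (Fin 2) ℂ}
    (hA : ∀ k, (A k).IsHermitian) (μ ν : Fin 4) :
    Theta (∑ k, (p k : ℂ) • (A k ⊗ₖ B k)) μ ν =
      ∑ k, p k * (pauliCoord (A k) μ * pauliCoord (B k) ν) := by
  simp only [Theta, of_apply, Finset.sum_mul, trace_sum, Complex.re_sum]
  refine Finset.sum_congr rfl fun k _ => ?_
  rw [Matrix.smul_mul, ← mul_kronecker_mul, trace_smul, trace_kronecker]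
  simp [pauliCoord, im_trace_mul_eq_zero (hA k) (isHermitian_pauli μ)]

theorem Theta_zero_zero {ρ : Matrix (Fin 2 × Fin 2) (Fin 2 × Fin 2) ℂ} (hρ : ρ.trace = 1) :
    Theta ρ 0 0 = 1 := by
  simp [Theta, pauli_zero, hρ]

theorem norm3_sq (v : Fin 3 → ℝ) : norm3 v ^ 2 = v ⬝ᵥ v := by
  rw [norm3, Real.sq_sqrt (Finset.sum_nonneg fun i _ => sq_nonneg (v i))]
  simp only [dotProduct, pow_two]

end Qubits

section Ensembles

variable {p : κ → ℝ} {A B : κ → Matrix (Fin 2) (Fin 2) ℂ}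

theorem sum_weights_eq_one (hA : ∀ k, (A k).trace = 1) (hB : ∀ k, (B k).trace = 1)
    (htr : (∑ k, (p k : ℂ) • (A k ⊗ₖ B k)).trace = 1) : ∑ k, p k = 1 := by
  simp only [trace_sum, trace_smul, trace_kronecker, hA, hB, smul_eq_mul, mul_one] at htr
  exact_mod_cast htr

theorem Theta_zero_succ (hA : ∀ k, (A k).IsHermitian) (hA1 : ∀ k, (A k).trace = 1) (j : Fin 3) :
    Theta (∑ k, (p k : ℂ) • (A k ⊗ₖ B k)) 0 j.succ = (∑ k, p k • blochVector (B k)) j := by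
  rw [Theta_sum_kronecker hA]
  simp [pauliCoord_zero (hA1 _), blochVector]

theorem Theta_succ_zero_sub_sum (hA : ∀ k, (A k).IsHermitian) (hB1 : ∀ k, (B k).trace = 1)
    (b : Fin 3 → ℝ) (i : Fin 3) :
    Theta (∑ k, (p k : ℂ) • (A k ⊗ₖ B k)) i.succ 0 -
        ∑ j : Fin 3, Theta (∑ k, (p k : ℂ) • (A k ⊗ₖ B k)) i.succ j.succ * b j =
      (∑ k, (p k * (1 - b ⬝ᵥ blochVector (B k))) • blochVector (A k)) i := by
  simp only [Theta_sum_kronecker hA, pauliCoord_zero (hB1 _), blochVector, Finset.sum_mul,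
    Finset.sum_apply, Pi.smul_apply, smul_eq_mul, dotProduct]
  rw [Finset.sum_comm, ← Finset.sum_sub_distrib]
  refine Finset.sum_congr rfl fun k _ => ?_
  rw [mul_sub, sub_mul, Finset.mul_sum, Finset.sum_mul]
  congr 1
  · ring
  · exact Finset.sum_congr rfl fun j _ => by ring

theorem det_Theta_eq_det_covariance (hA : ∀ k, (A k).IsHermitian) (hB1 : ∀ k, (B k).trace = 1)
    (htr : (∑ k, (p k : ℂ) • (A k ⊗ₖ B k)).trace = 1) {b : Fin 3 → ℝ}
    (hb : ∀ j, b j = Theta (∑ k, (p k : ℂ) • (A k ⊗ₖ B k)) 0 j.succ) :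
    (Theta (∑ k, (p k : ℂ) • (A k ⊗ₖ B k))).det =
      (∑ k, p k • vecMulVec (blochVector (A k)) (blochVector (B k) - b)).det := by
  rw [det_eq_det_sub_mul_of_apply_zero_zero (Theta_zero_zero htr)]
  congr 1
  ext i j
  simp only [of_apply, ← hb, Theta_sum_kronecker hA, pauliCoord_zero (hB1 _), Matrix.sum_apply,
    Matrix.smul_apply, vecMulVec_apply, blochVector, Finset.sum_mul, Pi.sub_apply, smul_eq_mul]
  rw [← Finset.sum_sub_distrib]
  exact Finset.sum_congr rfl fun k _ => by ring

end Ensembles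

/-- Separability bound on steering-ellipsoid volume: for any separable two-qubit state,
`γ_b⁴ |det Θ(ρ)| ≤ (1/54)(1 − 9‖c_A‖² + (1 + 3‖c_A‖²)^{3/2})`. -/
theorem stmt8 (ρ : Matrix (Fin 2 × Fin 2) (Fin 2 × Fin 2) ℂ)
    (hpsd : ρ.PosSemidef) (htr : ρ.trace = 1) (hsep : SepState ρ)
    (b : Fin 3 → ℝ) (hb : ∀ j, b j = Theta ρ 0 j.succ)
    (hb1 : norm3 b < 1)
    (γb : ℝ) (hγb : γb = 1 / Real.sqrt (1 - norm3 b ^ 2))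
    (cA : Fin 3 → ℝ)
    (hcA : ∀ i, cA i = γb ^ 2 * (Theta ρ i.succ 0 - ∑ j, Theta ρ i.succ j.succ * b j)) :
    γb ^ 4 * |(Theta ρ).det| ≤
      (1 / 54) * (1 - 9 * norm3 cA ^ 2
        + (1 + 3 * norm3 cA ^ 2) * Real.sqrt (1 + 3 * norm3 cA ^ 2)) := by
  obtain ⟨n, p, A, B, hp, hA, hB, rfl⟩ := hsep
  obtain ⟨⟨hA_psd, hA1⟩, hB_psd, hB1⟩ := And.intro (forall_and.1 hA) (forall_and.1 hB)
  have hA_herm : ∀ k, (A k).IsHermitian := fun k => (hA_psd k).1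
  have hb_pos : 0 < 1 - b ⬝ᵥ b := by
    rw [← norm3_sq, sub_pos]; exact pow_lt_one₀ (Real.sqrt_nonneg _) hb1 two_ne_zero
  have hγ : γb ^ 2 = (1 - b ⬝ᵥ b)⁻¹ := by
    rw [hγb, norm3_sq, div_pow, one_pow, Real.sq_sqrt hb_pos.le, one_div]
  have hb_sum : b = ∑ k, p k • blochVector (B k) :=
    funext fun j => (hb j).trans (Theta_zero_succ hA_herm hA1 j)
  have hc : (1 - b ⬝ᵥ b) • cA =
      ∑ k, (p k * (1 - b ⬝ᵥ blochVector (B k))) • blochVector (A k) := funext fun i => by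
    rw [Pi.smul_apply, smul_eq_mul, hcA, hγ, mul_inv_cancel_left₀ hb_pos.ne',
      Theta_succ_zero_sub_sum hA_herm hB1]
  have hbound := abs_det_covariance_div_sq_le hp (sum_weights_eq_one hA1 hB1 htr)
    (fun k => blochVector_dotProduct_self_le_one (hA_psd k) (hA1 k))
    (fun k => blochVector_dotProduct_self_le_one (hB_psd k) (hB1 k)) hb_sum (sub_pos.1 hb_pos) hc
  rwa [← det_Theta_eq_det_covariance hA_herm hB1 htr hb, div_eq_inv_mul, ← inv_pow, ← hγ, ← pow_mul,
    ← norm3_sq] at hbound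
end
end
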